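/- (Correctness of the generalized criterion, algorithm-free form) Let G be a finite set of labeled polynomials (each g^[v] ∈ G satisfies g = v·f⃗) containing f_i^[e_i] for every i = 1,...,m, equipped with a strict partial order <. Suppose that for every critical pair (x^{t_f}, f^[u], x^{t_g}, g^[v]) of two elements of G which is regular and is not gen-rewritable by G, there exists h^[w] ∈ G with w ≠ 0, s(w) = s(x^{t_f} u), and h^[w] < f^[u]. Then G is a labeled Gröbner basis of (f_1,...,f_m). -/

import Mathlib

/-!
Every critical pair that is regular is gen-rewritable: if neither side were, the hypothesis would
supply an element of `G` that rewrites the larger side. Consequently two multiples `x^t g` and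
`x^s h` that are not gen-rewritable and have the same leading power product also have the same
signature.

It follows, by induction on the signature of `u`, that every `u·f⃗ ≠ 0` shares its leading power
product with some multiple `x^t g` that is not gen-rewritable and has signature at most `s(u)`.
Descending along `<` from a multiple of `f_i^[e_i]`, choose such an `x^t g` with signature equal to
`s(u)`, and let `w = u - c x^t v` be the element of smaller signature obtained by cancelling the
leading terms of `u` and `x^t v`, where `v` is the label of `g`. If `x^t g` and `u·f⃗` have
different leading power products, then that of `w·f⃗` is the larger of the two. When it is that of
`u·f⃗`, the induction hypothesis for `w` is the claim; when it is that of `x^t g`, the induction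
hypothesis yields a second multiple with the leading power product of `x^t g` but a smaller
signature, which was just excluded.
-/

open MvPolynomial

noncomputable section

variable {k : Type*} [Field k] {m n : ℕ}

/-- The leading power product of a polynomial, w.r.t. the monomial order `L1`;
`⊥` for the zero polynomial. -/
def lpp (L1 : LinearOrder (Fin n →₀ ℕ)) (f : MvPolynomial (Fin n) k) :
    WithBot (Fin n →₀ ℕ) :=
  @Finset.max _ L1 f.support

/-- The leading coefficient of a polynomial w.r.t. the monomial order `L1`. -/
def plc (L1 : LinearOrder (Fin n →₀ ℕ)) (f : MvPolynomial (Fin n) k) : k :=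
  WithBot.recBotCoe 0 (fun α => MvPolynomial.coeff α f) (lpp L1 f)

/-- The support of a module element `u ∈ R^m`, as a set of module monomials `(i, α)`. -/
def msupport (u : Fin m → MvPolynomial (Fin n) k) : Finset (Fin m × (Fin n →₀ ℕ)) :=
  Finset.univ.biUnion fun i => (u i).support.image fun α => (i, α)

/-- The signature of a module element, w.r.t. the module term order `L2`;
`⊥` for the zero element. -/
def sig (L2 : LinearOrder (Fin m × (Fin n →₀ ℕ))) (u : Fin m → MvPolynomial (Fin n) k) :
    WithBot (Fin m × (Fin n →₀ ℕ)) :=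
  @Finset.max _ L2 (msupport u)

/-- The leading coefficient of a module element (the coefficient at its signature). -/
def mlc (L2 : LinearOrder (Fin m × (Fin n →₀ ℕ))) (u : Fin m → MvPolynomial (Fin n) k) : k :=
  WithBot.recBotCoe 0 (fun p => MvPolynomial.coeff p.2 (u p.1)) (sig L2 u)

/-- The strict order on `WithBot β` induced by a linear order `L` on `β`
(`⊥` smaller than everything). -/
def bslt {β : Type*} (L : LinearOrder β) (a b : WithBot β) : Prop :=
  WithBot.recBotCoe False (fun y => WithBot.recBotCoe True (fun x => L.lt x y) a) b

/-- The order on `WithBot β` induced by a linear order `L` on `β`. -/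
def bsle {β : Type*} (L : LinearOrder β) (a b : WithBot β) : Prop :=
  WithBot.recBotCoe (a = ⊥) (fun y => WithBot.recBotCoe True (fun x => L.le x y) a) b

/-- Multiplication of a module element by the monomial `x^t`. -/
def tsmul (t : Fin n →₀ ℕ) (u : Fin m → MvPolynomial (Fin n) k) :
    Fin m → MvPolynomial (Fin n) k :=
  fun i => monomial t (1 : k) * u i

/-- `u ⬝ f⃗ = u₁ f₁ + ⋯ + u_m f_m`. -/
def dotf (fvec u : Fin m → MvPolynomial (Fin n) k) : MvPolynomial (Fin n) k :=
  ∑ i, u i * fvec i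

/-- The least common multiple of two monomials (componentwise max of exponents). -/
def mlcm (α β : Fin n →₀ ℕ) : Fin n →₀ ℕ :=
  Finsupp.zipWith max (max_self 0) α β

/-- `G` is a labeled Gröbner basis of `(f₁, …, f_m)`. -/
def IsLabeledGB (L1 : LinearOrder (Fin n →₀ ℕ)) (L2 : LinearOrder (Fin m × (Fin n →₀ ℕ)))
    (fvec : Fin m → MvPolynomial (Fin n) k)
    (G : Set (MvPolynomial (Fin n) k × (Fin m → MvPolynomial (Fin n) k))) : Prop :=
  ∀ (f : MvPolynomial (Fin n) k) (u : Fin m → MvPolynomial (Fin n) k),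
    f = dotf fvec u → f ≠ 0 →
      ∃ gv ∈ G, gv.1 ≠ 0 ∧ ∃ t : Fin n →₀ ℕ,
        WithBot.map (fun β => t + β) (lpp L1 gv.1) = lpp L1 f ∧
        bsle L2 (sig L2 (tsmul t gv.2)) (sig L2 u)

/-- `f^[u]` has a standard representation w.r.t. the set `B` of labeled polynomials. -/
def HasStdRep (L1 : LinearOrder (Fin n →₀ ℕ)) (L2 : LinearOrder (Fin m × (Fin n →₀ ℕ)))
    (B : Set (MvPolynomial (Fin n) k × (Fin m → MvPolynomial (Fin n) k)))
    (f : MvPolynomial (Fin n) k) (u : Fin m → MvPolynomial (Fin n) k) : Prop :=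
  ∃ (N : ℕ) (p : Fin N → MvPolynomial (Fin n) k)
      (g : Fin N → MvPolynomial (Fin n) k × (Fin m → MvPolynomial (Fin n) k)),
    (∀ i, g i ∈ B) ∧ f = ∑ i, p i * (g i).1 ∧
    (∀ i, bsle L1 (lpp L1 (p i * (g i).1)) (lpp L1 f)) ∧
    (∀ i, bsle L2 (sig L2 (fun j => p i * (g i).2 j)) (sig L2 u))

/-- The polynomial part of the S-polynomial of the critical pair `(x^tg, gv, x^th, hw)`. -/
def spolyP (L1 : LinearOrder (Fin n →₀ ℕ))
    (gv hw : MvPolynomial (Fin n) k × (Fin m → MvPolynomial (Fin n) k))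
    (tg th : Fin n →₀ ℕ) : MvPolynomial (Fin n) k :=
  monomial tg (1 : k) * gv.1 - C (plc L1 gv.1 / plc L1 hw.1) * (monomial th (1 : k) * hw.1)

/-- The module part of the S-polynomial of the critical pair `(x^tg, gv, x^th, hw)`. -/
def spolyV (L1 : LinearOrder (Fin n →₀ ℕ))
    (gv hw : MvPolynomial (Fin n) k × (Fin m → MvPolynomial (Fin n) k))
    (tg th : Fin n →₀ ℕ) : Fin m → MvPolynomial (Fin n) k :=
  fun j =>
    monomial tg (1 : k) * gv.2 j - C (plc L1 gv.1 / plc L1 hw.1) * (monomial th (1 : k) * hw.2 j)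

/-- `f^[u]` is reducible (in one step, by a one-side-reduction) by the set `G`
of labeled polynomials. -/
def Reducible (L1 : LinearOrder (Fin n →₀ ℕ)) (L2 : LinearOrder (Fin m × (Fin n →₀ ℕ)))
    (G : Set (MvPolynomial (Fin n) k × (Fin m → MvPolynomial (Fin n) k)))
    (f : MvPolynomial (Fin n) k) (u : Fin m → MvPolynomial (Fin n) k) : Prop :=
  f ≠ 0 ∧ ∃ hw ∈ G, hw.1 ≠ 0 ∧ ∃ t : Fin n →₀ ℕ,
    WithBot.map (fun β => t + β) (lpp L1 hw.1) = lpp L1 f ∧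
    bslt L2 (sig L2 (tsmul t hw.2)) (sig L2 u)

/-- `x^t ⬝ fu` is generalized rewritable by the finite set `B` (w.r.t. the strict partial
order `r` on labeled polynomials). -/
def GenRewritable (L2 : LinearOrder (Fin m × (Fin n →₀ ℕ)))
    (B : Finset (MvPolynomial (Fin n) k × (Fin m → MvPolynomial (Fin n) k)))
    (r : (MvPolynomial (Fin n) k × (Fin m → MvPolynomial (Fin n) k)) →
         (MvPolynomial (Fin n) k × (Fin m → MvPolynomial (Fin n) k)) → Prop)
    (t : Fin n →₀ ℕ)
    (fu : MvPolynomial (Fin n) k × (Fin m → MvPolynomial (Fin n) k)) : Prop :=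
  ∃ gv ∈ B, gv.2 ≠ 0 ∧
    (∃ pq qq : Fin m × (Fin n →₀ ℕ), sig L2 gv.2 = ↑pq ∧ sig L2 fu.2 = ↑qq ∧
      pq.1 = qq.1 ∧ ∃ γ : Fin n →₀ ℕ, pq.2 + γ = t + qq.2) ∧
    r gv fu

/-- The position-over-term module order: `(i, α) ≺ (j, β)` iff `i > j`,
or `i = j` and `α ≺₁ β`. -/
def potLT (L1 : LinearOrder (Fin n →₀ ℕ)) (p q : Fin m × (Fin n →₀ ℕ)) : Prop :=
  q.1 < p.1 ∨ (p.1 = q.1 ∧ L1.lt p.2 q.2)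

/-- `p` is the signature of the module element `w` w.r.t. the linear order `lt`
on module monomials. -/
def IsSigWrt (lt : (Fin m × (Fin n →₀ ℕ)) → (Fin m × (Fin n →₀ ℕ)) → Prop)
    (w : Fin m → MvPolynomial (Fin n) k) (p : Fin m × (Fin n →₀ ℕ)) : Prop :=
  p ∈ msupport w ∧ ∀ q ∈ msupport w, q ≠ p → lt q p

end

/-! ### Orders with a bottom element adjoined -/

section BotOrder

variable {β : Type*} {L : LinearOrder β} {a b c : WithBot β}

lemma bslt_iff_lt : bslt L a b ↔ a < b := by
  induction b <;> induction a <;> simp [bslt]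

lemma bsle_iff_le : bsle L a b ↔ a ≤ b := by
  induction b <;> induction a <;> simp [bsle]

lemma bsle_refl (L : LinearOrder β) (a : WithBot β) : bsle L a a :=
  bsle_iff_le.2 le_rfl

lemma bslt.bsle (h : bslt L a b) : bsle L a b :=
  bsle_iff_le.2 (bslt_iff_lt.1 h).le

lemma bsle.trans (hab : bsle L a b) (hbc : bsle L b c) : bsle L a c :=
  bsle_iff_le.2 ((bsle_iff_le.1 hab).trans (bsle_iff_le.1 hbc))

lemma bsle.trans_bslt (hab : bsle L a b) (hbc : bslt L b c) : bslt L a c :=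
  bslt_iff_lt.2 ((bsle_iff_le.1 hab).trans_lt (bslt_iff_lt.1 hbc))

lemma bslt.ne_bot (h : bslt L a b) : b ≠ ⊥ :=
  (bslt_iff_lt.1 h).ne_bot

lemma bslt_trichotomy (L : LinearOrder β) (a b : WithBot β) :
    bslt L a b ∨ a = b ∨ bslt L b a := by
  simpa only [bslt_iff_lt] using lt_trichotomy a b

lemma bslt_map_iff {e : β → β} (he : ∀ x y, x < y → e x < e y) :
    bslt L (a.map e) (b.map e) ↔ bslt L a b := by
  have he_mono : StrictMono e := he
  simpa only [bslt_iff_lt] using he_mono.withBot_map.lt_iff_lt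

lemma wellFounded_bslt (hL : WellFounded L.lt) : WellFounded (bslt L) := by
  have : WellFoundedLT β := ⟨hL⟩
  exact Subrelation.wf bslt_iff_lt.1 (wellFounded_lt (α := WithBot β))

end BotOrder

lemma wellFounded_of_wellFounded_fiber {ι Γ : Type*} [Finite ι] {L₁ : LinearOrder Γ}
    {L₂ : LinearOrder (ι × Γ)} (hwf : WellFounded L₁.lt)
    (hmono : ∀ i α β, L₁.lt α β → L₂.lt (i, α) (i, β)) : WellFounded L₂.lt := by
  have := Fintype.ofFinite ι
  have hfiber (i : ι) : (Set.range (Prod.mk i)).WellFoundedOn L₂.lt := by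
    have hi : StrictMono (Prod.mk i : Γ → ι × Γ) := fun α β => hmono i α β
    exact Set.wellFoundedOn_range.2 (Subrelation.wf hi.lt_iff_lt.1 hwf)
  have hcover : ⋃ i ∈ Finset.univ, Set.range (Prod.mk i : Γ → ι × Γ) = Set.univ := by
    ext ⟨i, α⟩
    simp
  rw [← Set.wellFoundedOn_univ, ← hcover, Finset.wellFoundedOn_bUnion]
  exact fun i _ => hfiber i

/-! ### Maxima of finite sets -/

section FinsetMax

variable {β : Type*} {L : LinearOrder β} {r s t : Finset β}

lemma finset_max_eq_coe_iff {a : β} : s.max = a ↔ IsGreatest (s : Set β) a := by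
  refine ⟨fun h => ⟨Finset.mem_of_max h, fun b hb => Finset.le_max_of_eq hb h⟩, fun h => ?_⟩
  exact le_antisymm (Finset.max_le fun b hb => WithBot.coe_le_coe.2 (h.2 hb)) (Finset.le_max h.1)

lemma finset_max_of_coe_eq_image {e : β → β} (he : ∀ a b, a < b → e a < e b)
    (ht : (t : Set β) = e '' s) : t.max = s.max.map e := by
  have he_mono : StrictMono e := he
  rcases s.eq_empty_or_nonempty with rfl | hs
  · have ht_empty : t = ∅ := by simpa using ht
    simp [ht_empty]
  · obtain ⟨a, ha⟩ := Finset.max_of_nonempty hs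
    rw [ha, WithBot.map_coe, finset_max_eq_coe_iff, ht]
    exact he_mono.monotone.map_isGreatest (finset_max_eq_coe_iff.1 ha)

lemma finset_max_eq_of_max_lt (hsub : ∀ a ∈ r, a ∈ s ∨ a ∈ t) (hsup : ∀ a ∈ s, a ∉ t → a ∈ r)
    (hlt : t.max < s.max) : r.max = s.max := by
  obtain ⟨a, ha⟩ := WithBot.ne_bot_iff_exists.1 hlt.ne_bot
  have hgreatest := finset_max_eq_coe_iff.1 ha.symm
  have ha_notMem : a ∉ t := fun hat => (Finset.le_max hat).not_gt (ha ▸ hlt)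
  rw [← ha, finset_max_eq_coe_iff]
  refine ⟨hsup a hgreatest.1 ha_notMem, fun b hb => ?_⟩
  rcases hsub b hb with hbs | hbt
  · exact hgreatest.2 hbs
  · exact WithBot.coe_le_coe.1 ((Finset.le_max hbt).trans (ha ▸ hlt.le))

lemma finset_max_lt_of_notMem {a : β} (hsub : ∀ b ∈ r, b ∈ s ∨ b ∈ t) (hs : s.max = a)
    (ht : t.max = a) (ha : a ∉ r) : r.max < a := by
  have hle : r.max ≤ a := Finset.max_le fun b hb =>
    (hsub b hb).elim (fun h => hs ▸ Finset.le_max h) fun h => ht ▸ Finset.le_max h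
  exact hle.lt_of_ne fun h => ha (Finset.mem_of_max h)

end FinsetMax

noncomputable section

variable {k : Type*} [Field k] {m n : ℕ}

/-! ### Leading power products -/

section LeadingPowerProduct

variable {L1 : LinearOrder (Fin n →₀ ℕ)} {f g : MvPolynomial (Fin n) k}

lemma lpp_eq_bot_iff : lpp L1 f = ⊥ ↔ f = 0 := by
  rw [lpp, Finset.max_eq_bot, MvPolynomial.support_eq_empty]

lemma lpp_smul {c : k} (hc : c ≠ 0) : lpp L1 (c • f) = lpp L1 f := by
  rw [lpp, lpp, MvPolynomial.support_smul_eq hc]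

lemma lpp_sub_comm (f g : MvPolynomial (Fin n) k) : lpp L1 (f - g) = lpp L1 (g - f) := by
  rw [lpp, lpp, ← neg_sub, MvPolynomial.support_neg]

lemma lpp_sub_of_bslt (h : bslt L1 (lpp L1 g) (lpp L1 f)) : lpp L1 (f - g) = lpp L1 f := by
  refine finset_max_eq_of_max_lt (t := g.support) (fun α hα => ?_) (fun α hf hg => ?_)
    (bslt_iff_lt.1 h)
  · by_contra! hα'
    simp_all
  · simp_all

lemma lpp_sub_eq_or_eq_of_ne (h : lpp L1 f ≠ lpp L1 g) :
    lpp L1 (f - g) = lpp L1 f ∨ lpp L1 (f - g) = lpp L1 g := by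
  rcases bslt_trichotomy L1 (lpp L1 f) (lpp L1 g) with hlt | heq | hgt
  · exact .inr (by rw [lpp_sub_comm, lpp_sub_of_bslt hlt])
  · exact absurd heq h
  · exact .inl (lpp_sub_of_bslt hgt)

lemma support_monomial_one_mul (t : Fin n →₀ ℕ) (f : MvPolynomial (Fin n) k) :
    ((monomial t (1 : k) * f).support : Set (Fin n →₀ ℕ)) = (t + ·) '' f.support := by
  ext α
  simp only [Finset.mem_coe, MvPolynomial.mem_support_iff, Set.mem_image]
  constructor
  · intro h
    rw [coeff_monomial_mul'] at h
    split_ifs at h with hle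
    · exact ⟨α - t, by simpa using h, add_tsub_cancel_of_le hle⟩
    · exact absurd rfl h
  · rintro ⟨β, hβ, rfl⟩
    simpa using hβ

lemma lpp_monomial_mul (h1add : ∀ a b c : Fin n →₀ ℕ, L1.lt a b → L1.lt (a + c) (b + c))
    (t : Fin n →₀ ℕ) (f : MvPolynomial (Fin n) k) :
    lpp L1 (monomial t (1 : k) * f) = (lpp L1 f).map (t + ·) := by
  refine finset_max_of_coe_eq_image (fun α β hαβ => ?_) (support_monomial_one_mul t f)
  simpa only [add_comm t] using h1add α β t hαβ

end LeadingPowerProduct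

/-! ### Signatures -/

/-- The module monomial `x^t·(i, α) = (i, t + α)`, describing how `tsmul t` acts on signatures. -/
def mshift (t : Fin n →₀ ℕ) (p : Fin m × (Fin n →₀ ℕ)) : Fin m × (Fin n →₀ ℕ) :=
  (p.1, t + p.2)

lemma mshift_lt_mshift {L2 : LinearOrder (Fin m × (Fin n →₀ ℕ))}
    (h2add : ∀ (p q : Fin m × (Fin n →₀ ℕ)) (γ : Fin n →₀ ℕ),
      L2.lt p q → L2.lt (p.1, p.2 + γ) (q.1, q.2 + γ))
    (t : Fin n →₀ ℕ) (p q : Fin m × (Fin n →₀ ℕ)) (h : L2.lt p q) :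
    L2.lt (mshift t p) (mshift t q) := by
  simpa only [mshift, add_comm t] using h2add p q t h

lemma tsmul_zero (u : Fin m → MvPolynomial (Fin n) k) : tsmul 0 u = u :=
  one_smul (MvPolynomial (Fin n) k) u

lemma tsmul_tsmul (s t : Fin n →₀ ℕ) (u : Fin m → MvPolynomial (Fin n) k) :
    tsmul s (tsmul t u) = tsmul (s + t) u := by
  funext i
  simp only [tsmul, ← mul_assoc, monomial_mul, mul_one]

lemma dotf_sub_smul_tsmul (fvec u v : Fin m → MvPolynomial (Fin n) k) (c : k) (t : Fin n →₀ ℕ) :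
    dotf fvec (u - c • tsmul t v) =
      dotf fvec u - c • (monomial t (1 : k) * dotf fvec v) := by
  change (u - c • (monomial t (1 : k) • v)) ⬝ᵥ fvec = _
  rw [sub_dotProduct, smul_dotProduct, smul_dotProduct]
  rfl

section Signature

variable {L2 : LinearOrder (Fin m × (Fin n →₀ ℕ))} {u v : Fin m → MvPolynomial (Fin n) k}

lemma mem_msupport {p : Fin m × (Fin n →₀ ℕ)} : p ∈ msupport u ↔ coeff p.2 (u p.1) ≠ 0 := by
  obtain ⟨i, α⟩ := p
  simp [msupport]

lemma sig_eq_bot_iff : sig L2 u = ⊥ ↔ u = 0 := by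
  rw [sig, Finset.max_eq_bot, Finset.eq_empty_iff_forall_notMem]
  simp only [mem_msupport, not_not, Prod.forall, funext_iff, MvPolynomial.ext_iff, Pi.zero_apply,
    coeff_zero]

lemma sig_single (L2 : LinearOrder (Fin m × (Fin n →₀ ℕ))) (i : Fin m) :
    sig L2 (Pi.single i (1 : MvPolynomial (Fin n) k)) = ((i, 0) : Fin m × (Fin n →₀ ℕ)) := by
  have hsupport : msupport (Pi.single i (1 : MvPolynomial (Fin n) k)) = {(i, 0)} := by
    ext ⟨j, α⟩
    rcases eq_or_ne j i with rfl | hj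
    · simp [mem_msupport, coeff_one, eq_comm]
    · simp [mem_msupport, hj]
  rw [sig, hsupport, Finset.max_singleton]

lemma coe_msupport_tsmul (t : Fin n →₀ ℕ) (u : Fin m → MvPolynomial (Fin n) k) :
    (msupport (tsmul t u) : Set (Fin m × (Fin n →₀ ℕ))) = mshift t '' msupport u := by
  ext ⟨i, α⟩
  have h := Set.ext_iff.1 (support_monomial_one_mul t (u i)) α
  simpa [mem_msupport, mshift, tsmul] using h

lemma sig_tsmul
    (h2add : ∀ (p q : Fin m × (Fin n →₀ ℕ)) (γ : Fin n →₀ ℕ),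
      L2.lt p q → L2.lt (p.1, p.2 + γ) (q.1, q.2 + γ))
    (t : Fin n →₀ ℕ) (u : Fin m → MvPolynomial (Fin n) k) :
    sig L2 (tsmul t u) = (sig L2 u).map (mshift t) :=
  finset_max_of_coe_eq_image (mshift_lt_mshift h2add t) (coe_msupport_tsmul t u)

lemma bslt_sig_tsmul_iff
    (h2add : ∀ (p q : Fin m × (Fin n →₀ ℕ)) (γ : Fin n →₀ ℕ),
      L2.lt p q → L2.lt (p.1, p.2 + γ) (q.1, q.2 + γ)) (t : Fin n →₀ ℕ) :
    bslt L2 (sig L2 (tsmul t u)) (sig L2 (tsmul t v)) ↔ bslt L2 (sig L2 u) (sig L2 v) := by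
  rw [sig_tsmul h2add, sig_tsmul h2add, bslt_map_iff (mshift_lt_mshift h2add t)]

lemma exists_bslt_sig_sub_smul (hu : u ≠ 0) (h : sig L2 v = sig L2 u) :
    ∃ c : k, c ≠ 0 ∧ bslt L2 (sig L2 (u - c • v)) (sig L2 u) := by
  obtain ⟨p, hp⟩ := WithBot.ne_bot_iff_exists.1 (mt sig_eq_bot_iff.1 hu)
  have hpu := mem_msupport.1 (finset_max_eq_coe_iff.1 hp.symm).1
  have hpv := mem_msupport.1 (finset_max_eq_coe_iff.1 (h.trans hp.symm)).1
  refine ⟨coeff p.2 (u p.1) / coeff p.2 (v p.1), div_ne_zero hpu hpv, ?_⟩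
  rw [← hp, bslt_iff_lt]
  refine finset_max_lt_of_notMem (fun q hq => ?_) hp.symm (h.trans hp.symm) ?_
  · by_contra! hq'
    simp_all [mem_msupport]
  · simp [mem_msupport, hpv]

end Signature

/-! ### Rewriting -/

section Rewriting

variable {L2 : LinearOrder (Fin m × (Fin n →₀ ℕ))}
  {G : Finset (MvPolynomial (Fin n) k × (Fin m → MvPolynomial (Fin n) k))}
  {r : (MvPolynomial (Fin n) k × (Fin m → MvPolynomial (Fin n) k)) →
    (MvPolynomial (Fin n) k × (Fin m → MvPolynomial (Fin n) k)) → Prop}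
  {fu : MvPolynomial (Fin n) k × (Fin m → MvPolynomial (Fin n) k)} {t : Fin n →₀ ℕ}

lemma genRewritable_iff
    (h2add : ∀ (p q : Fin m × (Fin n →₀ ℕ)) (γ : Fin n →₀ ℕ),
      L2.lt p q → L2.lt (p.1, p.2 + γ) (q.1, q.2 + γ)) (hfu : fu.2 ≠ 0) :
    GenRewritable L2 G r t fu ↔
      ∃ gv ∈ G, (∃ s, sig L2 (tsmul s gv.2) = sig L2 (tsmul t fu.2)) ∧ r gv fu := by
  obtain ⟨q, hq⟩ := WithBot.ne_bot_iff_exists.1 (mt (sig_eq_bot_iff (L2 := L2)).1 hfu)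
  simp only [sig_tsmul h2add, ← hq, WithBot.map_coe, WithBot.map_eq_some_iff]
  constructor
  · rintro ⟨gv, hgv, -, ⟨p, q', hp, hq', hpos, γ, hγ⟩, hr⟩
    obtain rfl := WithBot.coe_injective (hq.trans hq')
    exact ⟨gv, hgv, ⟨γ, p, hp, Prod.ext hpos ((add_comm γ p.2).trans hγ)⟩, hr⟩
  · rintro ⟨gv, hgv, ⟨s, p, hp, hpq⟩, hr⟩
    have hgv_ne : gv.2 ≠ 0 := fun h => WithBot.coe_ne_bot (hp.symm.trans (sig_eq_bot_iff.2 h))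
    obtain ⟨hpos, hexp⟩ := Prod.ext_iff.1 hpq
    exact ⟨gv, hgv, hgv_ne, ⟨p, q, hp, hq.symm, hpos, s, (add_comm p.2 s).trans hexp⟩, hr⟩

lemma GenRewritable.add_left (ε : Fin n →₀ ℕ) (h : GenRewritable L2 G r t fu) :
    GenRewritable L2 G r (ε + t) fu := by
  obtain ⟨gv, hgv, hgv_ne, ⟨p, q, hp, hq, hpos, γ, hγ⟩, hr⟩ := h
  exact ⟨gv, hgv, hgv_ne, ⟨p, q, hp, hq, hpos, ε + γ, by rw [add_left_comm, hγ, add_assoc]⟩, hr⟩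

lemma exists_not_genRewritable_sig_eq
    (h2add : ∀ (p q : Fin m × (Fin n →₀ ℕ)) (γ : Fin n →₀ ℕ),
      L2.lt p q → L2.lt (p.1, p.2 + γ) (q.1, q.2 + γ))
    (hr : (G : Set (MvPolynomial (Fin n) k × (Fin m → MvPolynomial (Fin n) k))).WellFoundedOn r)
    (hGe : ∀ i, ∃ gv ∈ G, sig L2 gv.2 = ((i, 0) : Fin m × (Fin n →₀ ℕ)))
    {u : Fin m → MvPolynomial (Fin n) k} (hu : u ≠ 0) :
    ∃ gv ∈ G, ∃ t, sig L2 (tsmul t gv.2) = sig L2 u ∧ ¬ GenRewritable L2 G r t gv := by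
  have hmultiple : ∃ gv, gv ∈ G ∧ ∃ t, sig L2 (tsmul t gv.2) = sig L2 u := by
    obtain ⟨⟨i, α⟩, hiα⟩ := WithBot.ne_bot_iff_exists.1 (mt (sig_eq_bot_iff (L2 := L2)).1 hu)
    obtain ⟨gv, hgv, hsig⟩ := hGe i
    refine ⟨gv, hgv, α, ?_⟩
    rw [sig_tsmul h2add, hsig, WithBot.map_coe, mshift, add_zero, hiα]
  obtain ⟨gv, ⟨hgv, t, ht⟩, hmin⟩ := (Set.wellFoundedOn_iff.1 hr).has_min
    {gv | gv ∈ G ∧ ∃ t, sig L2 (tsmul t gv.2) = sig L2 u} hmultiple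
  have hgv_ne : gv.2 ≠ 0 := by
    intro h
    rw [sig_tsmul h2add, sig_eq_bot_iff.2 h, WithBot.map_bot] at ht
    exact hu (sig_eq_bot_iff.1 ht.symm)
  refine ⟨gv, hgv, t, ht, fun hrew => ?_⟩
  obtain ⟨hw, hhw, ⟨s, hs⟩, hlt⟩ := (genRewritable_iff h2add hgv_ne).1 hrew
  exact hmin hw ⟨hhw, s, hs.trans ht⟩ ⟨hlt, hhw, hgv⟩

end Rewriting

/-! ### The criterion -/

section Criterion

variable {L1 : LinearOrder (Fin n →₀ ℕ)} {L2 : LinearOrder (Fin m × (Fin n →₀ ℕ))}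
  {fvec : Fin m → MvPolynomial (Fin n) k}
  {G : Finset (MvPolynomial (Fin n) k × (Fin m → MvPolynomial (Fin n) k))}
  {r : (MvPolynomial (Fin n) k × (Fin m → MvPolynomial (Fin n) k)) →
    (MvPolynomial (Fin n) k × (Fin m → MvPolynomial (Fin n) k)) → Prop}
  {fu gv : MvPolynomial (Fin n) k × (Fin m → MvPolynomial (Fin n) k)}

lemma exists_add_mlcm_tsub {γ δ s t : Fin n →₀ ℕ} (h : t + γ = s + δ) :
    ∃ ε, ε + (mlcm γ δ - γ) = t ∧ ε + (mlcm γ δ - δ) = s := by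
  refine ⟨t + γ - mlcm γ δ, ?_, ?_⟩
  all_goals
    ext i
    have hi := DFunLike.congr_fun h i
    simp only [Finsupp.add_apply, Finsupp.tsub_apply, mlcm, Finsupp.zipWith_apply] at *
    omega

/-- Every regular critical pair of elements of `G` is gen-rewritable by `G`: the form in which the
proof uses the hypothesis of the criterion. The pairs range over nonzero polynomials only, since
`γ` and `δ` are not `⊥`. -/
def RegularPairsRewritable (L1 : LinearOrder (Fin n →₀ ℕ))
    (L2 : LinearOrder (Fin m × (Fin n →₀ ℕ)))
    (G : Finset (MvPolynomial (Fin n) k × (Fin m → MvPolynomial (Fin n) k)))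
    (r : (MvPolynomial (Fin n) k × (Fin m → MvPolynomial (Fin n) k)) →
      (MvPolynomial (Fin n) k × (Fin m → MvPolynomial (Fin n) k)) → Prop) : Prop :=
  ∀ fu ∈ G, ∀ gv ∈ G, ∀ γ δ : Fin n →₀ ℕ, lpp L1 fu.1 = γ → lpp L1 gv.1 = δ →
    bslt L2 (sig L2 (tsmul (mlcm γ δ - δ) gv.2)) (sig L2 (tsmul (mlcm γ δ - γ) fu.2)) →
    GenRewritable L2 G r (mlcm γ δ - γ) fu ∨ GenRewritable L2 G r (mlcm γ δ - δ) gv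

lemma regularPairsRewritable_of_exists_sig_eq
    (h2add : ∀ (p q : Fin m × (Fin n →₀ ℕ)) (γ : Fin n →₀ ℕ),
      L2.lt p q → L2.lt (p.1, p.2 + γ) (q.1, q.2 + γ))
    (hcrit : ∀ fu ∈ G, ∀ gv ∈ G, fu.1 ≠ 0 → gv.1 ≠ 0 →
      ∀ γ δ : Fin n →₀ ℕ,
        lpp L1 fu.1 = (γ : WithBot (Fin n →₀ ℕ)) →
        lpp L1 gv.1 = (δ : WithBot (Fin n →₀ ℕ)) →
        bslt L2 (sig L2 (tsmul (mlcm γ δ - δ) gv.2)) (sig L2 (tsmul (mlcm γ δ - γ) fu.2)) →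
        ¬ GenRewritable L2 G r (mlcm γ δ - γ) fu →
        ¬ GenRewritable L2 G r (mlcm γ δ - δ) gv →
        ∃ hw ∈ G, hw.2 ≠ 0 ∧
          sig L2 hw.2 = sig L2 (tsmul (mlcm γ δ - γ) fu.2) ∧ r hw fu) :
    RegularPairsRewritable L1 L2 G r := by
  intro fu hfu gv hgv γ δ hγ hδ hreg
  by_contra! hnot
  have hfu_ne : fu.1 ≠ 0 := fun h => WithBot.coe_ne_bot (hγ.symm.trans (lpp_eq_bot_iff.2 h))
  have hgv_ne : gv.1 ≠ 0 := fun h => WithBot.coe_ne_bot (hδ.symm.trans (lpp_eq_bot_iff.2 h))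
  have hu_ne : fu.2 ≠ 0 := by
    intro h
    exact hreg.ne_bot (by rw [sig_tsmul h2add, sig_eq_bot_iff.2 h, WithBot.map_bot])
  obtain ⟨hw, hhw, -, hsig, hlt⟩ :=
    hcrit fu hfu gv hgv hfu_ne hgv_ne γ δ hγ hδ hreg hnot.1 hnot.2
  refine hnot.1 ((genRewritable_iff h2add hu_ne).2 ⟨hw, hhw, ⟨0, ?_⟩, hlt⟩)
  rw [tsmul_zero, hsig]

lemma not_bslt_sig_of_lpp_eq
    (h1add : ∀ a b c : Fin n →₀ ℕ, L1.lt a b → L1.lt (a + c) (b + c))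
    (h2add : ∀ (p q : Fin m × (Fin n →₀ ℕ)) (γ : Fin n →₀ ℕ),
      L2.lt p q → L2.lt (p.1, p.2 + γ) (q.1, q.2 + γ))
    (hpairs : RegularPairsRewritable L1 L2 G r) (hfu : fu ∈ G) (hgv : gv ∈ G) (hfu_ne : fu.1 ≠ 0)
    {s t : Fin n →₀ ℕ} (ht : ¬ GenRewritable L2 G r t fu) (hs : ¬ GenRewritable L2 G r s gv)
    (hlpp : lpp L1 (monomial s (1 : k) * gv.1) = lpp L1 (monomial t (1 : k) * fu.1)) :
    ¬ bslt L2 (sig L2 (tsmul s gv.2)) (sig L2 (tsmul t fu.2)) := by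
  intro hlt
  obtain ⟨γ, hγ⟩ := WithBot.ne_bot_iff_exists.1 (mt (lpp_eq_bot_iff (L1 := L1)).1 hfu_ne)
  rw [lpp_monomial_mul h1add, lpp_monomial_mul h1add, ← hγ, WithBot.map_coe,
    WithBot.map_eq_some_iff] at hlpp
  obtain ⟨δ, hδ, hst⟩ := hlpp
  obtain ⟨ε, rfl, rfl⟩ := exists_add_mlcm_tsub hst.symm
  rw [← tsmul_tsmul, ← tsmul_tsmul, bslt_sig_tsmul_iff h2add] at hlt
  rcases hpairs fu hfu gv hgv γ δ hγ.symm hδ hlt with hrew | hrew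
  · exact ht (hrew.add_left ε)
  · exact hs (hrew.add_left ε)

lemma exists_not_genRewritable_lpp_eq
    (h1add : ∀ a b c : Fin n →₀ ℕ, L1.lt a b → L1.lt (a + c) (b + c))
    (h2add : ∀ (p q : Fin m × (Fin n →₀ ℕ)) (γ : Fin n →₀ ℕ),
      L2.lt p q → L2.lt (p.1, p.2 + γ) (q.1, q.2 + γ))
    (h2wf : WellFounded L2.lt)
    (hGlabeled : ∀ p ∈ G, p.1 = dotf fvec p.2)
    (hGe : ∀ i, ∃ gv ∈ G, sig L2 gv.2 = ((i, 0) : Fin m × (Fin n →₀ ℕ)))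
    (hr : (G : Set (MvPolynomial (Fin n) k × (Fin m → MvPolynomial (Fin n) k))).WellFoundedOn r)
    (hpairs : RegularPairsRewritable L1 L2 G r)
    (u : Fin m → MvPolynomial (Fin n) k) (hu : dotf fvec u ≠ 0) :
    ∃ gv ∈ G, ∃ t, ¬ GenRewritable L2 G r t gv ∧
      lpp L1 (monomial t (1 : k) * gv.1) = lpp L1 (dotf fvec u) ∧
      bsle L2 (sig L2 (tsmul t gv.2)) (sig L2 u) := by
  induction u using (InvImage.wf (sig L2) (wellFounded_bslt h2wf)).induction with
  | _ u ih =>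
  have hu_ne : u ≠ 0 := fun h => hu (by rw [h]; exact zero_dotProduct fvec)
  obtain ⟨gv, hgv, t, hsig, ht⟩ := exists_not_genRewritable_sig_eq h2add hr hGe hu_ne
  obtain ⟨c, hc, hlt⟩ := exists_bslt_sig_sub_smul hu_ne hsig
  set w := u - c • tsmul t gv.2 with hw
  have hdot : dotf fvec w = dotf fvec u - c • (monomial t (1 : k) * gv.1) := by
    rw [hw, dotf_sub_smul_tsmul, ← hGlabeled gv hgv]
  by_cases hlpp : lpp L1 (dotf fvec u) = lpp L1 (monomial t (1 : k) * gv.1)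
  · exact ⟨gv, hgv, t, ht, hlpp.symm, hsig ▸ bsle_refl L2 _⟩
  rw [← lpp_smul (f := monomial t (1 : k) * gv.1) hc] at hlpp
  have hw_ne : dotf fvec w ≠ 0 := by
    rw [hdot]
    exact sub_ne_zero.2 (ne_of_apply_ne _ hlpp)
  obtain ⟨hv, hhv, s, hs, hlpp_s, hle⟩ := ih w hlt hw_ne
  rcases lpp_sub_eq_or_eq_of_ne hlpp with hlpp_w | hlpp_w <;> rw [← hdot] at hlpp_w
  · exact ⟨hv, hhv, s, hs, hlpp_s.trans hlpp_w, hle.trans hlt.bsle⟩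
  · rw [lpp_smul hc] at hlpp_w
    have hgv_ne : gv.1 ≠ 0 := by
      intro h
      rw [h, mul_zero, lpp_eq_bot_iff.2 rfl, lpp_eq_bot_iff] at hlpp_w
      exact hw_ne hlpp_w
    exact absurd (hsig ▸ hle.trans_bslt hlt) (not_bslt_sig_of_lpp_eq h1add h2add hpairs hgv hhv
      hgv_ne ht hs (hlpp_s.trans hlpp_w))

theorem generalized_criterion_correct_general
    (h1add : ∀ a b c : Fin n →₀ ℕ, L1.lt a b → L1.lt (a + c) (b + c))
    (h2add : ∀ (p q : Fin m × (Fin n →₀ ℕ)) (γ : Fin n →₀ ℕ),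
      L2.lt p q → L2.lt (p.1, p.2 + γ) (q.1, q.2 + γ))
    (h2wf : WellFounded L2.lt)
    (hGlabeled : ∀ p ∈ G, p.1 = dotf fvec p.2)
    (hGe : ∀ i, ∃ gv ∈ G, sig L2 gv.2 = ((i, 0) : Fin m × (Fin n →₀ ℕ)))
    (hr : (G : Set (MvPolynomial (Fin n) k × (Fin m → MvPolynomial (Fin n) k))).WellFoundedOn r)
    (hpairs : RegularPairsRewritable L1 L2 G r) : IsLabeledGB L1 L2 fvec ↑G := by
  rintro _ u rfl hu
  obtain ⟨gv, hgv, t, -, hlpp, hle⟩ :=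
    exists_not_genRewritable_lpp_eq h1add h2add h2wf hGlabeled hGe hr hpairs u hu
  have hgv_ne : gv.1 ≠ 0 := by
    intro h
    rw [h, mul_zero, lpp_eq_bot_iff.2 rfl, eq_comm, lpp_eq_bot_iff] at hlpp
    exact hu hlpp
  exact ⟨gv, hgv, hgv_ne, t, (lpp_monomial_mul h1add t gv.1).symm.trans hlpp, hle⟩

end Criterion

end

/-- **Correctness of the generalized criterion (algorithm-free form).**
Let `G` be a finite set of labeled polynomials containing every `fᵢ^[eᵢ]`, equipped with
a strict partial order `r`.  If for every critical pair `(x^{t_f}, f^[u], x^{t_g}, g^[v])`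
of two elements of `G` which is regular and not gen-rewritable by `G` there exists
`h^[w] ∈ G` with `w ≠ 0`, `s(w) = s(x^{t_f} u)` and `h^[w] < f^[u]`, then `G` is a
labeled Gröbner basis of `(f₁, …, f_m)`. -/
theorem generalized_criterion_correct (k : Type*) [Field k] (n m : ℕ)
    (L1 : LinearOrder (Fin n →₀ ℕ)) (L2 : LinearOrder (Fin m × (Fin n →₀ ℕ)))
    (h1add : ∀ a b c : Fin n →₀ ℕ, L1.lt a b → L1.lt (a + c) (b + c))
    (h1wf : WellFounded L1.lt)
    (h2add : ∀ (p q : Fin m × (Fin n →₀ ℕ)) (γ : Fin n →₀ ℕ),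
      L2.lt p q → L2.lt (p.1, p.2 + γ) (q.1, q.2 + γ))
    (h21 : ∀ (i : Fin m) (α β : Fin n →₀ ℕ), L1.lt α β → L2.lt (i, α) (i, β))
    (fvec : Fin m → MvPolynomial (Fin n) k)
    (G : Finset (MvPolynomial (Fin n) k × (Fin m → MvPolynomial (Fin n) k)))
    (hGlabeled : ∀ p ∈ G, p.1 = dotf fvec p.2)
    (hGe : ∀ i : Fin m,
      (fvec i, (Pi.single i (1 : MvPolynomial (Fin n) k) :
        Fin m → MvPolynomial (Fin n) k)) ∈ G)
    (r : (MvPolynomial (Fin n) k × (Fin m → MvPolynomial (Fin n) k)) →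
         (MvPolynomial (Fin n) k × (Fin m → MvPolynomial (Fin n) k)) → Prop)
    (hirrefl : ∀ a, ¬ r a a)
    (htrans : ∀ a b c, r a b → r b c → r a c)
    (hcrit : ∀ fu ∈ G, ∀ gv ∈ G, fu.1 ≠ 0 → gv.1 ≠ 0 →
      ∀ γ δ : Fin n →₀ ℕ,
        lpp L1 fu.1 = (γ : WithBot (Fin n →₀ ℕ)) →
        lpp L1 gv.1 = (δ : WithBot (Fin n →₀ ℕ)) →
        -- the critical pair `(x^{t_f}, fu, x^{t_g}, gv)` is regular
        bslt L2 (sig L2 (tsmul (mlcm γ δ - δ) gv.2)) (sig L2 (tsmul (mlcm γ δ - γ) fu.2)) →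
        -- and it is not gen-rewritable by `G`
        ¬ GenRewritable L2 G r (mlcm γ δ - γ) fu →
        ¬ GenRewritable L2 G r (mlcm γ δ - δ) gv →
        ∃ hw ∈ G, hw.2 ≠ 0 ∧
          sig L2 hw.2 = sig L2 (tsmul (mlcm γ δ - γ) fu.2) ∧ r hw fu) :
    IsLabeledGB L1 L2 fvec (↑G) := by
  have : IsStrictOrder _ r := { irrefl := hirrefl, trans := htrans }
  exact generalized_criterion_correct_general h1add h2add
    (wellFounded_of_wellFounded_fiber h1wf h21) hGlabeled (fun i => ⟨_, hGe i, sig_single L2 i⟩)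
    G.finite_toSet.wellFoundedOn (regularPairsRewritable_of_exists_sig_eq h2add hcrit)
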